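/- Let P be a finite set of n points in ℝ² with no three collinear, and suppose every point of P determines at most x distinct distances to the other points of P, where x ≥ 1. Define T as the set of unordered triples {a,{p,q}} with a,p,q ∈ P distinct and dist a p = dist a q. Then |T| ≥ n(n-1)(n-1-x)/(2x). -/

import Mathlib

open scoped Classical

/-!
Fix an apex `a` and sort the other `n - 1` points by their distance to `a`. At most `x` concentric
circles occur, so by Cauchy–Schwarz the squares of their occupation numbers `m` sum to at least
`(n - 1)² / x`. A circle carries `m (m - 1) / 2` equidistant pairs, hence `a` is the apex of at
least `(n - 1) (n - 1 - x) / (2 x)` triples; sum over `a`.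
-/

section MonochromaticPairs

variable {α β : Type*} [DecidableEq β]

/-- The unordered pairs of distinct elements of `S` to which the colouring `f` gives the same
colour. Pairs are encoded as two-element finsets. For `f = dist a` they are the pairs
equidistant from `a`. -/
def monochromaticPairs (f : α → β) (S : Finset α) : Finset (Finset α) :=
  {s ∈ S.powersetCard 2 | ∀ p ∈ s, ∀ q ∈ s, f p = f q}

theorem monochromaticPairs_eq_biUnion [DecidableEq α] (f : α → β) (S : Finset α) :
    monochromaticPairs f S =
      (S.image f).biUnion fun b => ({p ∈ S | f p = b} : Finset α).powersetCard 2 := by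
  ext s
  simp only [monochromaticPairs, Finset.mem_filter, Finset.mem_powersetCard, Finset.mem_biUnion]
  constructor
  · rintro ⟨⟨hsS, hs⟩, hmono⟩
    obtain ⟨p, hp⟩ : s.Nonempty := Finset.card_pos.1 (by lia)
    exact ⟨f p, Finset.mem_image_of_mem f (hsS hp),
      fun q hq => Finset.mem_filter.2 ⟨hsS hq, hmono q hq p hp⟩, hs⟩
  · rintro ⟨b, -, hsb, hs⟩
    have hcolour (p) (hp : p ∈ s) : f p = b := (Finset.mem_filter.1 (hsb hp)).2
    exact ⟨⟨hsb.trans (Finset.filter_subset _ _), hs⟩,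
      fun p hp q hq => (hcolour p hp).trans (hcolour q hq).symm⟩

theorem card_monochromaticPairs (f : α → β) (S : Finset α) :
    (monochromaticPairs f S).card =
      ∑ b ∈ S.image f, ({p ∈ S | f p = b} : Finset α).card.choose 2 := by
  rw [monochromaticPairs_eq_biUnion, Finset.card_biUnion]
  · simp only [Finset.card_powersetCard]
  · intro b _ b' _ hne
    refine Finset.disjoint_left.2 fun s hs hs' => ?_
    rw [Finset.mem_powersetCard] at hs hs'
    obtain ⟨p, hp⟩ : s.Nonempty := Finset.card_pos.1 (by lia)
    exact hne ((Finset.mem_filter.1 (hs.1 hp)).2.symm.trans (Finset.mem_filter.1 (hs'.1 hp)).2)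

theorem sum_sq_card_fiber (f : α → β) (S : Finset α) :
    ∑ b ∈ S.image f, (({p ∈ S | f p = b} : Finset α).card : ℝ) ^ 2 =
      S.card + 2 * (monochromaticPairs f S).card := by
  rw [card_monochromaticPairs, Finset.card_eq_sum_card_image f S]
  push_cast
  rw [Finset.mul_sum, ← Finset.sum_add_distrib]
  refine Finset.sum_congr rfl fun b _ => ?_
  rw [Nat.cast_choose_two]
  ring

theorem sq_card_le_card_image_mul_sum_sq_card_fiber (f : α → β) (S : Finset α) :
    (S.card : ℝ) ^ 2 ≤
      (S.image f).card * ∑ b ∈ S.image f, (({p ∈ S | f p = b} : Finset α).card : ℝ) ^ 2 := by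
  nth_rw 1 [Finset.card_eq_sum_card_image f S]
  push_cast
  exact sq_sum_le_card_mul_sum_sq

theorem card_mul_card_sub_le_mul_card_monochromaticPairs {f : α → β} {S : Finset α} {x : ℕ}
    (hx : (S.image f).card ≤ x) :
    (S.card : ℝ) * (S.card - x) ≤ 2 * x * (monochromaticPairs f S).card := by
  have hsq : (S.card : ℝ) ^ 2 ≤ x * (S.card + 2 * (monochromaticPairs f S).card) := by
    calc (S.card : ℝ) ^ 2
        ≤ (S.image f).card * (S.card + 2 * (monochromaticPairs f S).card) :=
          sum_sq_card_fiber f S ▸ sq_card_le_card_image_mul_sum_sq_card_fiber f S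
      _ ≤ x * (S.card + 2 * (monochromaticPairs f S).card) := by gcongr
  linarith

end MonochromaticPairs

section Apex

variable {α β : Type*} [DecidableEq α] [DecidableEq β]

theorem card_apex_pairs_eq_sum_card_monochromaticPairs (d : α → α → β) (P : Finset α) :
    ((P ×ˢ P.powersetCard 2).filter fun as =>
      as.1 ∉ as.2 ∧ ∀ p ∈ as.2, ∀ q ∈ as.2, d as.1 p = d as.1 q).card =
      ∑ a ∈ P, (monochromaticPairs (d a) (P.erase a)).card := by
  rw [Finset.card_filter, Finset.sum_product]
  refine Finset.sum_congr rfl fun a _ => ?_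
  rw [← Finset.card_filter]
  congr 1
  ext s
  simp only [monochromaticPairs, Finset.mem_filter, Finset.mem_powersetCard, Finset.subset_erase]
  tauto

theorem szemeredi_lower_count_general (d : α → α → β) {P : Finset α} {x : ℕ} (hx : 1 ≤ x)
    (hd : ∀ a ∈ P, ((P.erase a).image (d a)).card ≤ x) :
    (P.card : ℝ) * (P.card - 1) * (P.card - 1 - x) / (2 * x) ≤
      (((P ×ˢ P.powersetCard 2).filter fun as =>
        as.1 ∉ as.2 ∧ ∀ p ∈ as.2, ∀ q ∈ as.2, d as.1 p = d as.1 q).card : ℝ) := by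
  have hapex (a) (ha : a ∈ P) : ((P.card : ℝ) - 1) * (P.card - 1 - x) ≤
      2 * x * (monochromaticPairs (d a) (P.erase a)).card := by
    simpa only [Finset.cast_card_erase_of_mem ha] using
      card_mul_card_sub_le_mul_card_monochromaticPairs (hd a ha)
  rw [card_apex_pairs_eq_sum_card_monochromaticPairs, div_le_iff₀' (by positivity)]
  calc (P.card : ℝ) * (P.card - 1) * (P.card - 1 - x)
      = ∑ _a ∈ P, ((P.card : ℝ) - 1) * (P.card - 1 - x) := by
        rw [Finset.sum_const, nsmul_eq_mul, mul_assoc]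
    _ ≤ ∑ a ∈ P, 2 * x * ((monochromaticPairs (d a) (P.erase a)).card : ℝ) :=
        Finset.sum_le_sum hapex
    _ = 2 * x * (∑ a ∈ P, (monochromaticPairs (d a) (P.erase a)).card : ℕ) := by
        rw [Nat.cast_sum, Finset.mul_sum]

end Apex

theorem szemeredi_lower_count (n x : ℕ) (hx : 1 ≤ x)
    (P : Finset (EuclideanSpace ℝ (Fin 2))) (hP : P.card = n)
    (h3 : ∀ a ∈ P, ∀ b ∈ P, ∀ c ∈ P, a ≠ b → a ≠ c → b ≠ c →
      ¬ Collinear ℝ ({a, b, c} : Set (EuclideanSpace ℝ (Fin 2))))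
    (hdist : ∀ p ∈ P, ((P.erase p).image (fun q => dist p q)).card ≤ x) :
    (n : ℝ) * (n - 1) * (n - 1 - x) / (2 * x) ≤
      (((P ×ˢ P.powersetCard 2).filter fun as =>
        as.1 ∉ as.2 ∧ ∀ p ∈ as.2, ∀ q ∈ as.2, dist as.1 p = dist as.1 q).card : ℝ) := by
  subst hP
  exact szemeredi_lower_count_general dist hx hdist
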